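/- Let A be an alphabet and π = {(u_i,u_j) : 1 ≤ i < j ≤ n} ∪ {(v_k,v_l) : 1 ≤ k < l ≤ m} a system of defining relations with pairwise distinct u_i and pairwise distinct v_k. Then every word w that is square-free relative to π has a finite equivalence class [w]_π; consequently, the set SF(A,π) of words square-free relative to π is decidable. -/

import Mathlib

/-!
Call two words equivalent if they have the same class. All the `u i` are equivalent, and so are all
the `v k`; so let `C true` and `C false` be the classes of the `u i` and of the `v k`.

The core of the argument bounds the lengths of the words in the class of a relatively square-free
word `w`, assuming that `C true` and `C false` are finite. Along any chain of rewritings starting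
at `w`, the current word is kept decomposed into pieces (`Sys.Dec`). A piece is either a letter of
`w` not yet rewritten, or a block: a nonempty factor `x` of some `p ++ x ++ q ∈ C b`, the parts `p`
and `q` having been consumed by a rewriting of the neighbouring piece, from which they can be
recovered. Initially there are `w.length` pieces. When a factor `d ∈ C b` is rewritten, it either
lies inside one piece, which just changes, or it contains a whole piece, and then it becomes a full
block replacing all the pieces it contains and shortening at most one partially covered piece on
each side. All remaining configurations produce a square: the typical reason is that if `d = e ++ h`
properly overlaps a member `h ++ r` of the same class, then `e ++ h ++ r` is equivalent to
`h ++ r ++ r`. Hence the number of pieces never increases (`Sys.Dec.step`), and since each piece is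
bounded by the longest word of `C true ∪ C false`, the class of `w` is finite
(`finite_class_of_finite`).

The classes `C b` that matter, namely those of families some relation of which applies to a word
equivalent to `w`, are finite for the following reason. Their members occur in words equivalent to
`w`, hence are relatively square-free, so none of them is equivalent to a proper factor of itself.
So relations of the family `b` apply to a member of `C b` only as a whole, and `C b` is the union of
the classes of the words of family `b` with respect to the other family alone (`class_subset`).
Applying the same two steps to a system with a single family shows that these are finite.

For decidability, list the class of a given word by breadth-first rewriting until a word with a
square turns up or the list is closed under rewriting. One of the two must happen, since the class
is finite if it contains no square, and every test is primitive recursive.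
-/

namespace SqFreePaper

variable {A : Type*}

/-- A word is square-free if it contains no nonempty factor of the form `s ++ s`. -/
def IsSquareFreeWord (w : List A) : Prop :=
  ∀ u s v : List A, w = u ++ s ++ s ++ v → s = []

/-- One-step rewriting relation associated with a system of defining relations `π`. -/
def OneStep (π : List A → List A → Prop) (x y : List A) : Prop :=
  ∃ r s u v : List A, x = r ++ u ++ s ∧ y = r ++ v ++ s ∧ (π u v ∨ π v u)

/-- The congruence `=_π` generated by `π`: reflexive-transitive closure of one-step rewriting. -/
def EqRel (π : List A → List A → Prop) : List A → List A → Prop :=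
  Relation.ReflTransGen (OneStep π)

/-- `w` is square-free relative to `π`: every word in its `=_π`-class is square-free. -/
def SFRel (π : List A → List A → Prop) (w : List A) : Prop :=
  ∀ z, EqRel π w z → IsSquareFreeWord z

/-- Union of two systems of defining relations. -/
def PiRel (σ ρ : List A → List A → Prop) (x y : List A) : Prop := σ x y ∨ ρ x y

/-- The set of defining words of a system `σ`. -/
def DWords (σ : List A → List A → Prop) : Set (List A) :=
  {x | ∃ y, σ x y ∨ σ y x}

/-- The closure of `D_σ` under the congruence `=_ρ`. -/
def ClosureD (σ ρ : List A → List A → Prop) : Set (List A) :=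
  {x | ∃ w ∈ DWords σ, EqRel ρ w x}

/-- The system `{(u_i, u_j) : i < j}` determined by a finite family of words. -/
def FamilyRel {n : ℕ} (u : Fin n → List A) (x y : List A) : Prop :=
  ∃ i j : Fin n, i < j ∧ x = u i ∧ y = u j

/-- `x ~ y` iff both lie in `D̄_σ` or both lie in `D̄_ρ`. -/
def Sim (σ ρ : List A → List A → Prop) (x y : List A) : Prop :=
  (x ∈ ClosureD σ ρ ∧ y ∈ ClosureD σ ρ) ∨ (x ∈ ClosureD ρ σ ∧ y ∈ ClosureD ρ σ)

/-- `D_τ = D̄_σ ∪ D̄_ρ`. -/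
def DTau (σ ρ : List A → List A → Prop) : Set (List A) :=
  ClosureD σ ρ ∪ ClosureD ρ σ

/-- The concatenation `x_a ++ x_{a+1} ++ ⋯ ++ x_{a+len-1}`. -/
def wordSeg (x : ℕ → List A) (a len : ℕ) : List A :=
  ((List.range' a len).map x).flatten

/-- Standing hypotheses of the paper: `D̄_σ`, `D̄_ρ` are finite, nonempty, disjoint,
and closed under `=_σ`, `=_ρ` respectively. -/
def SettingHyps (σ ρ : List A → List A → Prop) : Prop :=
  (ClosureD σ ρ).Finite ∧ (ClosureD ρ σ).Finite ∧
  (ClosureD σ ρ).Nonempty ∧ (ClosureD ρ σ).Nonempty ∧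
  (ClosureD σ ρ ∩ ClosureD ρ σ = ∅) ∧
  (∀ x ∈ ClosureD σ ρ, ∀ y, EqRel σ x y → y ∈ ClosureD σ ρ) ∧
  (∀ x ∈ ClosureD ρ σ, ∀ y, EqRel ρ x y → y ∈ ClosureD ρ σ)

/-- `x_1, …, x_n` (with complementary members `p_i`, `q_i`) is a linear decomposition. -/
def IsLinDecomp (σ ρ : List A → List A → Prop) (n : ℕ) (x p q : ℕ → List A) : Prop :=
  1 ≤ n ∧
  (∀ i, 1 ≤ i → i ≤ n → x i ≠ []) ∧
  (∃ u v : ℕ → List A,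
    (∀ i, 1 < i → i ≤ n → Sim σ ρ (p i ++ x i ++ q i) (q (i-1) ++ u i)) ∧
    (∀ i, 1 ≤ i → i < n → Sim σ ρ (p i ++ x i ++ q i) (v i ++ p (i+1)))) ∧
  (∀ i, 1 ≤ i → i < n → q i = [] ∨ p (i+1) = []) ∧
  p 1 = [] ∧ q n = [] ∧ (n = 1 → x 1 ∈ DTau σ ρ)

/-- `Lin(n)`: words with a linear decomposition of at most `n` members. -/
def LinSet (σ ρ : List A → List A → Prop) (n : ℕ) : Set (List A) :=
  {w | ∃ m, 1 ≤ m ∧ m ≤ n ∧ ∃ x p q, IsLinDecomp σ ρ m x p q ∧ w = wordSeg x 1 m}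

/-- `Lin = ⋃ₙ Lin(n)`: linearly decomposable words. -/
def LinAll (σ ρ : List A → List A → Prop) : Set (List A) :=
  {w | ∃ n, w ∈ LinSet σ ρ n}

/-- Occurrence `(r, d, s)` contains occurrence `(p, e, q)` (of the same word)
iff `|r| ≤ |p|` and `|s| ≤ |q|`. -/
def Contained (p q r s : List A) : Prop := r.length ≤ p.length ∧ s.length ≤ q.length

/-- Two occurrences in `w` overlap iff some occurrence of a nonempty word is
contained in both. -/
def Overlap (w p q r s : List A) : Prop :=
  ∃ a f b : List A, f ≠ [] ∧ w = a ++ f ++ b ∧ Contained a b p q ∧ Contained a b r s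

/-- `(p, e, q)` is a maximal occurrence in `w` of a word `e` in the set `L`. -/
def MaximalOcc (L : Set (List A)) (w p e q : List A) : Prop :=
  w = p ++ e ++ q ∧ e ∈ L ∧
  ∀ r d s, w = r ++ d ++ s → d ∈ L → Contained p q r s → r = p ∧ d = e ∧ s = q


/-! ### Systems of two saturated classes -/

/-- A congruence `E` on words together with two sets `C false`, `C true` of nonempty words, each of
which is empty or a single `E`-class. -/
structure Sys (A : Type*) where
  E : List A → List A → Prop
  refl : ∀ x, E x x
  symm : ∀ {x y}, E x y → E y x
  trans : ∀ {x y z}, E x y → E y z → E x z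
  congr : ∀ r s {x y}, E x y → E (r ++ x ++ s) (r ++ y ++ s)
  C : Bool → Set (List A)
  sat : ∀ {b x y}, x ∈ C b → E x y → y ∈ C b
  rel : ∀ {b x y}, x ∈ C b → y ∈ C b → E x y
  ne : ∀ {b}, [] ∉ C b

namespace Sys

/-- Every word congruent to `z` is square-free. -/
def SF (S : Sys A) (z : List A) : Prop := ∀ y, S.E z y → IsSquareFreeWord y

theorem SF.no {S : Sys A} {z y a s c : List A} (h : S.SF z) (hE : S.E z y)
    (hy : y = a ++ s ++ s ++ c) (hs : s ≠ []) : False :=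
  hs (h y hE a s c hy)

/-- Rewriting a factor, with the two decompositions as side goals. -/
theorem sub (S : Sys A) {x y z w : List A} (r s : List A) (h : S.E x y)
    (hz : z = r ++ x ++ s) (hw : w = r ++ y ++ s) : S.E z w := by
  subst hz hw; exact S.congr r s h

theorem ne_nil (S : Sys A) {b : Bool} {x : List A} (h : x ∈ S.C b) : x ≠ [] := by
  rintro rfl; exact S.ne h

/-- The mirror image of a system: all words are read backwards. -/
def rev (S : Sys A) : Sys A where
  E x y := S.E x.reverse y.reverse
  refl x := S.refl _
  symm h := S.symm h
  trans h h' := S.trans h h'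
  congr r s x y h := by
    have := S.congr s.reverse r.reverse h
    simpa using this
  C b := {x | x.reverse ∈ S.C b}
  sat h h' := S.sat h h'
  rel h h' := S.rel h h'
  ne := by intro b; simpa using S.ne

@[simp] theorem rev_rev (S : Sys A) : S.rev.rev = S := by
  cases S; simp [rev]

theorem rev_E (S : Sys A) {x y : List A} : S.rev.E x y ↔ S.E x.reverse y.reverse := Iff.rfl

theorem mem_rev_C (S : Sys A) {b : Bool} {x : List A} : x ∈ S.rev.C b ↔ x.reverse ∈ S.C b :=
  Iff.rfl

theorem squareFree_reverse {z : List A} (h : IsSquareFreeWord z) : IsSquareFreeWord z.reverse := by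
  intro u s v hz
  have := h v.reverse s.reverse u.reverse (by
    rw [← List.reverse_reverse z, hz]; simp)
  simpa using this

theorem SF.rev {S : Sys A} {z : List A} (h : S.SF z) : S.rev.SF z.reverse := by
  intro y hy
  rw [rev_E, List.reverse_reverse] at hy
  simpa using squareFree_reverse (h _ hy)

end Sys

/-! ### Pieces and chains of pieces -/

/-- A piece of a word. For `t = none` it is a single letter not yet involved in any rewriting. For
`t = some b` it is a block: a nonempty factor `x` of a member `p ++ x ++ q` of the class `C b`, the
parts `p` and `q` having been taken over by the neighbouring pieces. A block is full if `p` and `q`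
are empty. -/
structure Piece (A : Type*) where
  t : Option Bool
  p : List A
  x : List A
  q : List A

namespace Piece

/-- The piece read backwards. -/
def mirror (P : Piece A) : Piece A := ⟨P.t, P.q.reverse, P.x.reverse, P.p.reverse⟩

@[simp] theorem mirror_mirror (P : Piece A) : P.mirror.mirror = P := by
  cases P; simp [mirror]

end Piece

/-- The word spelled by a list of pieces. -/
def flat (L : List (Piece A)) : List A := (L.map Piece.x).flatten

@[simp] theorem flat_nil : flat ([] : List (Piece A)) = [] := rfl
@[simp] theorem flat_cons (P : Piece A) (L : List (Piece A)) : flat (P :: L) = P.x ++ flat L := rfl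

namespace Sys

/-- The local validity of a single piece. -/
def Good (S : Sys A) (P : Piece A) : Prop :=
  (P.t = none → P.p = [] ∧ P.q = [] ∧ ∃ a, P.x = [a]) ∧
  (∀ b, P.t = some b → P.x ≠ [] ∧ P.p ++ P.x ++ P.q ∈ S.C b)

/-- Compatibility of adjacent pieces: a piece of kind `t` lacking `q` on the right, then a
piece of kind `t'` lacking `p'` on the left. At most one of the two lacks something, and what it
lacks is a proper prefix (suffix) of a word of the class of the other, whose kind is opposite. -/
def Adj (S : Sys A) (t : Option Bool) (q : List A) (t' : Option Bool) (p' : List A) : Prop :=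
  (q ≠ [] → p' = [] ∧ ∃ b, t = some b ∧ t' = some (!b) ∧ ∃ g, g ≠ [] ∧ q ++ g ∈ S.C (!b)) ∧
  (p' ≠ [] → q = [] ∧ ∃ b, t = some b ∧ t' = some (!b) ∧ ∃ g, g ≠ [] ∧ g ++ p' ∈ S.C b)

/-- `S.R t q L`: the pieces `L` form a valid continuation, up to the right end of the word, of a
piece of kind `t` lacking `q` on the right. -/
def R (S : Sys A) : Option Bool → List A → List (Piece A) → Prop
  | _, q, [] => q = []
  | t, q, Q :: L => S.Adj t q Q.t Q.p ∧ S.Good Q ∧ R S Q.t Q.q L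

theorem Good.rev {S : Sys A} {P : Piece A} (h : S.Good P) : S.rev.Good P.mirror := by
  refine ⟨fun ht => ?_, fun b hb => ?_⟩
  · obtain ⟨h1, h2, a, h3⟩ := h.1 ht
    exact ⟨by simp [Piece.mirror, h2], by simp [Piece.mirror, h1], a, by simp [Piece.mirror, h3]⟩
  · obtain ⟨h1, h2⟩ := h.2 b hb
    refine ⟨by simpa [Piece.mirror] using h1, ?_⟩
    rw [mem_rev_C]; simpa [Piece.mirror] using h2

theorem Adj.rev {S : Sys A} {t t' : Option Bool} {q p' : List A} (h : S.Adj t q t' p') :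
    S.rev.Adj t' p'.reverse t q.reverse := by
  refine ⟨fun hp => ?_, fun hq => ?_⟩
  · obtain ⟨h1, b, h2, h3, g, h4, h5⟩ := h.2 (by simpa using hp)
    refine ⟨by simp [h1], !b, h3, by simpa using h2, g.reverse, by simpa using h4, ?_⟩
    rw [mem_rev_C]; simpa using h5
  · obtain ⟨h1, b, h2, h3, g, h4, h5⟩ := h.1 (by simpa using hq)
    refine ⟨by simp [h1], !b, h3, by simpa using h2, g.reverse, by simpa using h4, ?_⟩
    rw [mem_rev_C]; simpa using h5

/-- A missing right part can be recovered: the pieces to the right can be rewritten so that the word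
they spell begins with it. -/
theorem R.act {S : Sys A} : ∀ {L : List (Piece A)} {t : Option Bool} {q : List A},
    S.R t q L → ∃ y, S.E (flat L) (q ++ y)
  | [], _, q, h => ⟨[], by have h : q = [] := h; subst h; exact S.refl _⟩
  | Q :: L, t, q, ⟨ha, hg, hr⟩ => by
    by_cases hq : q = []
    · exact ⟨flat (Q :: L), by subst hq; exact S.refl _⟩
    · obtain ⟨hp, b, -, hb', g, -, hg'⟩ := ha.1 hq
      obtain ⟨y, hy⟩ := hr.act
      obtain ⟨-, hC⟩ := hg.2 _ hb'
      refine ⟨g ++ y, S.trans (S.sub Q.x [] hy (by simp) rfl) ?_⟩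
      exact S.sub [] y (S.rel hC hg') (by simp [hp]) (by simp)

/-- What is a valid continuation of a lone letter is a valid continuation of any piece that lacks
nothing on the right: next to a lone letter, the first piece lacks nothing on the left. -/
theorem R.of_none {S : Sys A} {L : List (Piece A)} {t : Option Bool} (h : S.R none [] L) :
    S.R t [] L := by
  cases L with
  | nil => rfl
  | cons Q L =>
    obtain ⟨ha, hg, hr⟩ := h
    refine ⟨⟨by simp, fun hp => ?_⟩, hg, hr⟩
    obtain ⟨-, b, hb, -⟩ := ha.2 hp
    simp at hb

/-- The right neighbour of a piece lacking something on the right. -/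
theorem R.of_ne {S : Sys A} {L : List (Piece A)} {t : Option Bool} {q : List A} (h : S.R t q L)
    (hq : q ≠ []) : ∃ N K b g, L = N :: K ∧ t = some b ∧ N.t = some (!b) ∧ N.p = [] ∧
      g ≠ [] ∧ q ++ g ∈ S.C (!b) ∧ S.Good N ∧ S.R N.t N.q K := by
  cases L with
  | nil => exact absurd h hq
  | cons N K =>
    obtain ⟨ha, hg, hr⟩ := h
    obtain ⟨h1, b, h2, h3, g, h4, h5⟩ := ha.1 hq
    exact ⟨N, K, b, g, rfl, h2, h3, h1, h4, h5, hg, hr⟩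

/-! ### Forbidden overlaps -/

/-- An occurrence of `e ++ h ∈ C b` cannot end properly inside a block `h ++ r` of the same kind:
replacing `e ++ h` by the equivalent word `p ++ (h ++ r) ++ q`, and recovering the missing part `q`
after `r`, produces the square of `r ++ q`. -/
theorem no_overlap (S : Sys A) {b : Bool} {α e h r p q : List A} {L : List (Piece A)}
    (hR : S.R (some b) q L) (hx : p ++ (h ++ r) ++ q ∈ S.C b) (hd : e ++ h ∈ S.C b) (hr : r ≠ [])
    (hSF : S.SF (α ++ e ++ h ++ r ++ flat L)) : False := by
  obtain ⟨y, hy⟩ := hR.act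
  refine hSF.no (a := α ++ p ++ h) (s := r ++ q) (c := y) (S.trans
    (S.sub (α ++ e ++ h ++ r) [] hy (by simp) rfl)
    (S.sub α (r ++ q ++ y) (S.rel hd hx) (by simp) rfl)) (by simp) (by simp [hr])

/-- In an occurrence of `e ++ h ∈ C b` with `e` nonempty, no block of the same kind lacking nothing
on the left can start right after `e` (in particular, for `h = []`, right after the occurrence). -/
theorem no_start (S : Sys A) {b : Bool} {α β e h : List A} {N : Piece A} {L : List (Piece A)}
    (hN : S.Good N) (hR : S.R N.t N.q L) (hb : N.t = some b) (hp : N.p = [])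
    (he : e ≠ []) (hd : e ++ h ∈ S.C b) (hf : flat (N :: L) = h ++ β)
    (hSF : S.SF (α ++ e ++ h ++ β)) : False := by
  obtain ⟨-, hC⟩ := hN.2 b hb
  have key : ∀ g, h = N.x ++ g → False := by
    rintro g rfl
    obtain ⟨y, hy⟩ := hR.act
    simp only [flat_cons, List.append_assoc] at hf
    refine hSF.no (a := α) (s := e) (c := N.x ++ g ++ y) (S.trans
      (S.sub (α ++ e ++ N.x) [] hy (w := α ++ e ++ (N.p ++ N.x ++ N.q) ++ y)
        (by simp [List.append_cancel_left hf]) (by simp [hp]))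
      (S.sub (α ++ e) y (S.rel hC hd) rfl rfl)) (by simp) he
  simp only [flat_cons] at hf
  rcases List.append_eq_append_iff.1 hf with ⟨g, h1, h2⟩ | ⟨g, h1, h2⟩
  · exact key g h1
  · by_cases hg : g = []
    · exact key [] (by simp [h1, hg])
    · rw [hb] at hR
      rw [h1] at hC
      exact S.no_overlap (α := α) hR hC hd hg (by simpa [h2] using hSF)

/-! ### Scanning an occurrence to the right -/

/-- Right scan from a block `x` of the same kind as the occurrence `e ++ x ++ d'`: the occurrence
stops at the end of the block, or else ends properly inside the next piece. Hence the rest `β` of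
the word still consists of no more pieces than before, and they form a valid continuation of a full
block put in place of the occurrence. The word `y` comes from recovering the part `p` missing on the
left. -/
theorem scan_same (S : Sys A) {b : Bool} {p x q e d' α β y : List A} {L : List (Piece A)}
    (hX : p ++ x ++ q ∈ S.C b) (hR : S.R (some b) q L) (hy : S.E (α ++ e) (y ++ p)) (hx : x ≠ [])
    (hf : flat L = d' ++ β) (hd : e ++ x ++ d' ∈ S.C b) (hSF : S.SF (α ++ e ++ x ++ d' ++ β)) :
    ∃ L', L'.length ≤ L.length ∧ flat L' = β ∧ S.R (some b) [] L' := by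
  by_cases hq : q = []
  · subst hq
    by_cases hd' : d' = []
    · subst hd'
      exact ⟨L, le_rfl, by simpa using hf, hR⟩
    · refine (hSF.no (a := y ++ e ++ x) (s := d') (c := β) (S.trans
        (S.sub [] (x ++ d' ++ β) hy (by simp) rfl)
        (S.sub y (d' ++ β) (S.rel hX hd) (by simp) rfl)) (by simp) hd').elim
  · obtain ⟨N, K, b', g, rfl, hb', hNt, hNp, hg, hqg, hN, hK⟩ := hR.of_ne hq
    obtain rfl : b = b' := by simpa using hb'
    obtain ⟨hNx, hNC⟩ := hN.2 _ hNt
    have hd' : d' ≠ [] := by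
      rintro rfl
      obtain ⟨y', hy'⟩ := hR.act
      refine hSF.no (a := α ++ p ++ x) (s := q) (c := y') (S.trans
        (S.sub (α ++ e ++ x) [] hy' (by simp [hf]) rfl)
        (S.sub α (q ++ y') (S.rel hd hX) (by simp) rfl)) (by simp) hq
    have key : ∀ d₂, d' = N.x ++ d₂ → False := by
      rintro d₂ rfl
      have hK' : flat K = d₂ ++ β := by simpa using hf
      by_cases hNq : N.q = []
      · have hE : S.E N.x (q ++ g) := S.rel (by simpa [hNp, hNq] using hNC) hqg
        have h2 : e ++ x ++ (q ++ g) ++ d₂ ∈ S.C b :=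
          S.sat hd (S.sub (e ++ x) d₂ hE (by simp) (by simp))
        refine hSF.no (a := y ++ e ++ x ++ q) (s := g ++ d₂) (c := β) (S.trans (S.trans
          (S.sub (α ++ e ++ x) (d₂ ++ β) hE (by simp) rfl)
          (S.sub [] (x ++ (q ++ g) ++ d₂ ++ β) hy (by simp) rfl))
          (S.sub y (g ++ d₂ ++ β) (S.rel hX h2) (by simp) rfl)) (by simp) (by simp [hg])
      · obtain ⟨N', K', b', -, rfl, hb', hNt', hNp', -, -, hN', hK₂⟩ := hK.of_ne hNq
        obtain rfl : (!b) = b' := by simpa [hNt] using hb'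
        exact S.no_start (α := α) (e := e ++ x ++ N.x) (h := d₂) hN' hK₂ (by simpa using hNt') hNp'
          (by simp [hx]) (by simpa using hd) hK' (by simpa using hSF)
    simp only [flat_cons] at hf
    rcases List.append_eq_append_iff.1 hf with ⟨r, h1, h2⟩ | ⟨r, h1, h2⟩
    · exact (key r h1).elim
    · by_cases hr : r = []
      · exact (key [] (by simp [h1, hr])).elim
      · refine ⟨⟨N.t, d', r, N.q⟩ :: K, by simp, by simp [h2], ⟨by simp, fun _ => ?_⟩, ?_, hK⟩
        · exact ⟨rfl, b, rfl, hNt, e ++ x, by simp [hx], hd⟩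
        · refine ⟨fun h => by simp [hNt] at h, fun c hc => ⟨hr, ?_⟩⟩
          obtain rfl : (!b) = c := by simpa [hNt] using hc
          simpa [hNp, h1] using hNC

/-- Right scan, after a part `e` of the occurrence `e ++ d'` that ends with a piece of a
different kind: either the rest `β` of the word consists of pieces that form a valid continuation of
a full block put in place of the occurrence, or the occurrence contains a block of its own kind. -/
theorem scan_other (S : Sys A) {b : Bool} {α β : List A} : ∀ {L : List (Piece A)} {t : Option Bool}
    {e d' : List A}, S.R t [] L → t ≠ some b → e ≠ [] →
    (t = some (!b) → ∃ e₁ v, e = e₁ ++ v ∧ v ∈ S.C (!b)) → e ++ d' ∈ S.C b → flat L = d' ++ β →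
    S.SF (α ++ e ++ d' ++ β) →
    (∃ L', L'.length ≤ L.length ∧ flat L' = β ∧ S.R (some b) [] L') ∨
    (∃ K₁ X K₂ d₃, L = K₁ ++ X :: K₂ ∧ X.t = some b ∧ d' = flat K₁ ++ X.x ++ d₃ ∧
      flat K₂ = d₃ ++ β)
  | [], t, e, d', hR, _, he, ht, hd, hf, hSF => by
    obtain ⟨rfl, rfl⟩ : d' = [] ∧ β = [] := by simpa using hf.symm
    exact Or.inl ⟨[], le_rfl, rfl, rfl⟩
  | Q :: L, t, e, d', ⟨ha, hQ, hR⟩, htb, he, ht, hd, hf, hSF => by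
    -- if `Q` lacks a left part, the current piece is a full block of the other kind
    have hQp : Q.p ≠ [] → t = some (!b) ∧ Q.t = some b ∧ ∃ g, g ≠ [] ∧ g ++ Q.p ∈ S.C (!b) := by
      intro h
      obtain ⟨-, c, h1, h2, h3⟩ := ha.2 h
      have hc : c = !b := by
        cases c <;> cases b <;> simp_all
      subst hc
      exact ⟨h1, by simpa using h2, h3⟩
    by_cases hd' : d' = []
    · subst hd'
      left
      refine ⟨Q :: L, le_rfl, by simpa using hf, ⟨by simp, fun hp => ?_⟩, hQ, hR⟩
      obtain ⟨h1, h2, g, hg, hgC⟩ := hQp hp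
      obtain ⟨e₁, v, rfl, hv⟩ := ht h1
      obtain ⟨-, hC⟩ := hQ.2 _ h2
      obtain ⟨y, hy⟩ := hR.act
      have h4 : e₁ ++ (g ++ Q.p) ∈ S.C b :=
        S.sat hd (S.sub e₁ [] (S.rel hv hgC) (by simp) (by simp))
      exfalso
      refine hSF.no (a := α) (s := e₁ ++ g) (c := Q.p ++ y) (S.trans (S.trans
        (S.sub (α ++ e₁ ++ v ++ Q.x) [] hy (w := α ++ e₁ ++ v ++ Q.x ++ (Q.q ++ y))
          (by simp only [List.nil_append] at hf; simp [← hf]) (by simp))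
        (S.sub (α ++ e₁) (Q.x ++ Q.q ++ y) (S.rel hv hgC) (by simp) rfl))
        (S.sub (α ++ e₁ ++ g) y (S.rel hC h4) (by simp) rfl)) (by simp) (by simp [hg])
    · have key : ∀ d₂, d' = Q.x ++ d₂ →
          (∃ L', L'.length ≤ (Q :: L).length ∧ flat L' = β ∧ S.R (some b) [] L') ∨
          (∃ K₁ X K₂ d₃, Q :: L = K₁ ++ X :: K₂ ∧ X.t = some b ∧ d' = flat K₁ ++ X.x ++ d₃ ∧
            flat K₂ = d₃ ++ β) := by
        rintro d₂ rfl
        have hf' : flat L = d₂ ++ β := by simpa using hf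
        by_cases hQb : Q.t = some b
        · exact Or.inr ⟨[], Q, L, d₂, rfl, hQb, by simp, hf'⟩
        · have hp : Q.p = [] := by
            by_contra h; exact hQb (hQp h).2.1
          have hq : Q.q = [] := by
            by_contra h
            obtain ⟨N, K, c, -, rfl, hc, hNt, hNp, -, -, hN, hK⟩ := hR.of_ne h
            have hc' : c = !b := by
              rw [hc] at hQb; cases c <;> cases b <;> simp_all
            exact S.no_start (α := α) (e := e ++ Q.x) (h := d₂) hN hK (by simpa [hc'] using hNt) hNp
              (by simp [he]) (by simpa using hd) hf' (by simpa using hSF)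
          rw [hq] at hR
          have := scan_other S (e := e ++ Q.x) (d' := d₂) hR hQb (by simp [he])
            (fun h => ⟨e, Q.x, rfl, by simpa [hp, hq] using (hQ.2 _ h).2⟩) (by simpa using hd) hf'
            (by simpa using hSF)
          rcases this with ⟨L', h1, h2, h3⟩ | ⟨K₁, X, K₂, d₃, rfl, h2, rfl, h4⟩
          · exact Or.inl ⟨L', h1.trans (by simp), h2, h3⟩
          · exact Or.inr ⟨Q :: K₁, X, K₂, d₃, rfl, h2, by simp, h4⟩
      have hf' := hf
      simp only [flat_cons] at hf'
      rcases List.append_eq_append_iff.1 hf' with ⟨r, h1, h2⟩ | ⟨r, h1, h2⟩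
      · exact key r h1
      · by_cases hr : r = []
        · exact key [] (by simp [h1, hr])
        · left
          cases hQt : Q.t with
          | none =>
            obtain ⟨-, -, a, hx⟩ := hQ.1 hQt
            have := congrArg List.length (hx.symm.trans h1)
            have h3 := List.length_pos_iff.2 hr
            have h4 := List.length_pos_iff.2 hd'
            simp at this; omega
          | some c =>
            obtain ⟨-, hC⟩ := hQ.2 _ hQt
            by_cases hcb : c = b
            · subst hcb
              rw [hQt] at hR
              rw [h1] at hC
              exact (S.no_overlap (α := α) hR hC hd hr (by simpa [h2] using hSF)).elim
            · have hc' : c = !b := by cases c <;> cases b <;> simp_all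
              subst hc'
              have hp : Q.p = [] := by
                by_contra h; exact hcb (by simpa [hQt] using (hQp h).2.1)
              refine ⟨⟨Q.t, d', r, Q.q⟩ :: L, by simp, by simp [h2], ⟨by simp, fun _ => ?_⟩, ?_, hR⟩
              · exact ⟨rfl, b, rfl, hQt, e, he, hd⟩
              · refine ⟨fun h => by simp [hQt] at h, fun c' hc => ⟨hr, ?_⟩⟩
                obtain rfl : (!b) = c' := by simpa [hQt] using hc
                simpa [hp, h1] using hC


/-! ### Decompositions with a focus -/

/-- A decomposed word with a distinguished piece `P`; the pieces to the left of `P`, nearest first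
and read backwards, form the list `L₁` of pieces of the reversed system. -/
def Zip (S : Sys A) (L₁ : List (Piece A)) (P : Piece A) (L₂ : List (Piece A)) : Prop :=
  S.rev.R P.t P.p.reverse L₁ ∧ S.Good P ∧ S.R P.t P.q L₂

/-- `z` has a valid decomposition into at most `n` pieces. -/
def Dec (S : Sys A) (n : ℕ) (z : List A) : Prop :=
  ∃ L₁ P L₂, S.Zip L₁ P L₂ ∧ L₁.length + 1 + L₂.length ≤ n ∧
    z = (flat L₁).reverse ++ P.x ++ flat L₂

theorem Zip.rev {S : Sys A} {L₁ L₂ : List (Piece A)} {P : Piece A} (h : S.Zip L₁ P L₂) :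
    S.rev.Zip L₂ P.mirror L₁ := by
  obtain ⟨h1, h2, h3⟩ := h
  exact ⟨by simpa [Piece.mirror] using h3, h2.rev, h1⟩

theorem Zip.of_rev {S : Sys A} {L₁ L₂ : List (Piece A)} {P : Piece A} (h : S.rev.Zip L₂ P L₁) :
    S.Zip L₁ P.mirror L₂ := by
  simpa using h.rev

theorem Zip.right {S : Sys A} {L₁ L₂ : List (Piece A)} {P Q : Piece A} (h : S.Zip L₁ P (Q :: L₂)) :
    S.Zip (P.mirror :: L₁) Q L₂ := by
  obtain ⟨h1, h2, ha, h3, h4⟩ := h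
  exact ⟨⟨ha.rev, h2.rev, h1⟩, h3, h4⟩

theorem Zip.left {S : Sys A} {L₁ L₂ : List (Piece A)} {P Q : Piece A} (h : S.Zip (Q :: L₁) P L₂) :
    S.Zip L₁ Q.mirror (P :: L₂) := by
  have := h.rev.right.of_rev
  rwa [Piece.mirror_mirror] at this

theorem Zip.move {S : Sys A} {X : Piece A} {K₂ : List (Piece A)} :
    ∀ {K₁ L₁ : List (Piece A)} {P : Piece A},
    S.Zip L₁ P (K₁ ++ X :: K₂) → ∃ L, S.Zip L X K₂ ∧ L.length = L₁.length + 1 + K₁.length ∧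
      (flat L).reverse = (flat L₁).reverse ++ P.x ++ flat K₁
  | [], L₁, P, h => ⟨_, h.right, by simp, by simp [Piece.mirror]⟩
  | Q :: K₁, L₁, P, h => by
    obtain ⟨L, h1, h2, h3⟩ := Zip.move (K₁ := K₁) h.right
    refine ⟨L, h1, ?_, ?_⟩
    · simp [h2]; omega
    · simp [h3, Piece.mirror]

/-- The focus can be placed on the piece containing a given letter of the word. -/
theorem Zip.focus {S : Sys A} {L₁ L₂ : List (Piece A)} {P : Piece A} (h : S.Zip L₁ P L₂)
    {α γ : List A} (hγ : γ ≠ []) (hz : (flat L₁).reverse ++ P.x ++ flat L₂ = α ++ γ) :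
    ∃ K₁ Q K₂ s₁ s₂, S.Zip K₁ Q K₂ ∧
      K₁.length + 1 + K₂.length = L₁.length + 1 + L₂.length ∧ Q.x = s₁ ++ s₂ ∧ s₂ ≠ [] ∧
      α = (flat K₁).reverse ++ s₁ ∧ γ = s₂ ++ flat K₂ := by
  have hleft : ∀ (L₁ L₂ : List (Piece A)) (P : Piece A), S.Zip L₁ P L₂ →
      (flat L₁).reverse ++ P.x ++ flat L₂ = α ++ γ → ∃ Q K, S.Zip [] Q K ∧
      1 + K.length = L₁.length + 1 + L₂.length ∧ Q.x ++ flat K = α ++ γ := by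
    intro L₁
    induction L₁ with
    | nil => intro L₂ P h hz; exact ⟨P, L₂, h, by simp, by simpa using hz⟩
    | cons Q L₁ ih =>
      intro L₂ P h hz
      obtain ⟨Q', K, h1, h2, h3⟩ := ih _ _ h.left (by simpa [Piece.mirror] using hz)
      exact ⟨Q', K, h1, by simp at h2 ⊢; omega, h3⟩
  have hright : ∀ (L₂ L₁ : List (Piece A)) (P : Piece A) (α' : List A), S.Zip L₁ P L₂ →
      P.x ++ flat L₂ = α' ++ γ → α = (flat L₁).reverse ++ α' → ∃ K₁ Q K₂ s₁ s₂, S.Zip K₁ Q K₂ ∧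
      K₁.length + 1 + K₂.length = L₁.length + 1 + L₂.length ∧ Q.x = s₁ ++ s₂ ∧ s₂ ≠ [] ∧
      α = (flat K₁).reverse ++ s₁ ∧ γ = s₂ ++ flat K₂ := by
    intro L₂
    induction L₂ with
    | nil =>
      intro L₁ P α' h hz hα
      exact ⟨L₁, P, [], α', γ, h, by simp, by simpa using hz, hγ, hα, by simp⟩
    | cons Q L₂ ih =>
      intro L₁ P α' h hz hα
      have key : ∀ g, α' = P.x ++ g → ∃ K₁ Q' K₂ s₁ s₂, S.Zip K₁ Q' K₂ ∧
          K₁.length + 1 + K₂.length = L₁.length + 1 + (Q :: L₂).length ∧ Q'.x = s₁ ++ s₂ ∧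
          s₂ ≠ [] ∧ α = (flat K₁).reverse ++ s₁ ∧ γ = s₂ ++ flat K₂ := by
        rintro g rfl
        obtain ⟨K₁, Q', K₂, s₁, s₂, h1, h2, h3⟩ :=
          ih (P.mirror :: L₁) Q g h.right (by simpa using hz) (by simp [hα, Piece.mirror])
        exact ⟨K₁, Q', K₂, s₁, s₂, h1, by simp at h2 ⊢; omega, h3⟩
      rcases List.append_eq_append_iff.1 hz with ⟨g, h1, h2⟩ | ⟨g, h1, h2⟩
      · exact key g h1
      · by_cases hg : g = []
        · exact key [] (by simp [h1, hg])
        · exact ⟨L₁, P, Q :: L₂, α', g, h, rfl, h1, hg, hα, h2⟩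
  obtain ⟨Q, K, h1, h2, h3⟩ := hleft L₁ L₂ P h hz
  obtain ⟨K₁, Q', K₂, s₁, s₂, h4, h5, h6⟩ := hright K [] Q α h1 h3 (by simp)
  exact ⟨K₁, Q', K₂, s₁, s₂, h4, by simp at h5; omega, h6⟩

/-! ### Rewriting a decomposed word -/

/-- A new full block between valid left and right parts. -/
theorem Dec.mk' {S : Sys A} {b : Bool} {n : ℕ} {dd α β : List A} {L₁ L₂ : List (Piece A)}
    (hdd : dd ∈ S.C b) (h₁ : S.rev.R (some b) [] L₁) (h₂ : S.R (some b) [] L₂)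
    (hα : flat L₁ = α.reverse) (hβ : flat L₂ = β) (hn : L₁.length + 1 + L₂.length ≤ n) :
    S.Dec n (α ++ dd ++ β) := by
  refine ⟨L₁, ⟨some b, [], dd, []⟩, L₂, ⟨by simpa using h₁, ⟨by simp, fun c hc => ?_⟩, h₂⟩, hn,
    by simp [hα, hβ]⟩
  obtain rfl : b = c := by simpa using hc
  exact ⟨S.ne_nil hdd, by simpa using hdd⟩

/-- Rewriting an occurrence that contains a whole block `X` of its own kind. -/
theorem Zip.step_same {S : Sys A} {b : Bool} {α β e d' dd : List A} {L₁ L₂ : List (Piece A)}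
    {X : Piece A} (h : S.Zip L₁ X L₂) (hb : X.t = some b) (hα : (flat L₁).reverse = α ++ e)
    (hβ : flat L₂ = d' ++ β) (hd : e ++ X.x ++ d' ∈ S.C b) (hdd : dd ∈ S.C b)
    (hSF : S.SF (α ++ e ++ X.x ++ d' ++ β)) :
    S.Dec (L₁.length + 1 + L₂.length) (α ++ dd ++ β) := by
  have hα' : flat L₁ = e.reverse ++ α.reverse := by
    rw [← List.reverse_reverse (flat L₁), hα]; simp
  obtain ⟨h1, hg, h2⟩ := h
  obtain ⟨hx, hC⟩ := hg.2 b hb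
  rw [hb] at h1 h2
  obtain ⟨y₁, hy₁⟩ := h1.act
  obtain ⟨y₂, hy₂⟩ := h2.act
  obtain ⟨L₂', hl₂, hf₂, hr₂⟩ := S.scan_same (α := α) (y := y₁.reverse) hC h2
    (by rw [rev_E] at hy₁; simpa [hα] using hy₁) hx hβ hd hSF
  obtain ⟨L₁', hl₁, hf₁, hr₁⟩ := S.rev.scan_same (b := b) (p := X.q.reverse) (x := X.x.reverse)
    (q := X.p.reverse) (e := d'.reverse) (d' := e.reverse) (α := β.reverse) (β := α.reverse)
    (y := y₂.reverse) (by rw [mem_rev_C]; simpa using hC) h1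
    (by rw [rev_E]; simpa [hβ] using hy₂) (by simpa using hx) hα'
    (by rw [mem_rev_C]; simpa using hd) (by simpa using hSF.rev)
  exact Dec.mk' hdd hr₁ hr₂ hf₁ hf₂ (by omega)

/-- A piece contained in the occurrence and not of its kind lacks nothing on the right. -/
theorem Zip.full_right {S : Sys A} {b : Bool} {α β e d' : List A} {L₁ L₂ : List (Piece A)}
    {X : Piece A} (h : S.Zip L₁ X L₂) (hb : X.t ≠ some b) (hβ : flat L₂ = d' ++ β)
    (hd : e ++ X.x ++ d' ∈ S.C b) (hSF : S.SF (α ++ e ++ X.x ++ d' ++ β)) : X.q = [] := by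
  obtain ⟨-, hg, h2⟩ := h
  by_contra hq
  obtain ⟨N, K, c, -, rfl, hc, hNt, hNp, -, -, hN, hK⟩ := h2.of_ne hq
  have hc' : c = !b := by
    rw [hc] at hb; cases c <;> cases b <;> simp_all
  obtain ⟨hx, -⟩ := hg.2 _ hc
  exact S.no_start (α := α) (e := e ++ X.x) (h := d') hN hK (by simpa [hc'] using hNt) hNp
    (by simp [hx]) (by simpa using hd) hβ (by simpa using hSF)

theorem Good.x_ne {S : Sys A} {P : Piece A} (h : S.Good P) : P.x ≠ [] := by
  cases ht : P.t with
  | none => obtain ⟨-, -, a, ha⟩ := h.1 ht; simp [ha]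
  | some b => exact (h.2 b ht).1

/-- Rewriting an occurrence that contains a whole piece `X`, of any kind. -/
theorem Zip.step_pivot {S : Sys A} {b : Bool} {α β e d' dd : List A} {L₁ L₂ : List (Piece A)}
    {X : Piece A} (h : S.Zip L₁ X L₂) (hα : (flat L₁).reverse = α ++ e)
    (hβ : flat L₂ = d' ++ β) (hd : e ++ X.x ++ d' ∈ S.C b) (hdd : dd ∈ S.C b)
    (hSF : S.SF (α ++ e ++ X.x ++ d' ++ β)) :
    S.Dec (L₁.length + 1 + L₂.length) (α ++ dd ++ β) := by
  by_cases hb : X.t = some b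
  · exact h.step_same hb hα hβ hd hdd hSF
  have hα' : flat L₁ = e.reverse ++ α.reverse := by
    rw [← List.reverse_reverse (flat L₁), hα]; simp
  have hd' : d'.reverse ++ X.mirror.x ++ e.reverse ∈ S.rev.C b := by
    rw [mem_rev_C]; simpa [Piece.mirror] using hd
  have hSF' : S.rev.SF (β.reverse ++ d'.reverse ++ X.mirror.x ++ e.reverse ++ α.reverse) := by
    simpa [Piece.mirror] using hSF.rev
  have hq : X.q = [] := h.full_right hb hβ hd hSF
  have hp : X.p = [] := by
    simpa [Piece.mirror] using h.rev.full_right (b := b) hb hα' hd' hSF'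
  have h' := h
  obtain ⟨h1, hg, h2⟩ := h
  rw [hq] at h2
  rw [hp] at h1
  have hC : X.t = some (!b) → X.x ∈ S.C (!b) := fun ht => by
    simpa [hp, hq] using (hg.2 _ ht).2
  rcases S.scan_other (α := α) (e := e ++ X.x) h2 hb (by simp [hg.x_ne])
    (fun ht => ⟨e, X.x, rfl, hC ht⟩) hd hβ (by simpa using hSF) with
    ⟨L₂', hl₂, hf₂, hr₂⟩ | ⟨K₁, Y, K₂, d₃, rfl, hY, rfl, hK⟩
  · rcases S.rev.scan_other (b := b) (α := β.reverse) (e := d'.reverse ++ X.mirror.x)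
      (d' := e.reverse) (β := α.reverse) (by simpa using h1) hb (by simp [hg.rev.x_ne])
      (fun ht => ⟨d'.reverse, X.mirror.x, rfl, by
        rw [mem_rev_C]; simpa [Piece.mirror] using hC ht⟩) hd' hα' (by simpa using hSF') with
      ⟨L₁', hl₁, hf₁, hr₁⟩ | ⟨K₁, Y, K₂, d₃, rfl, hY, he, hK⟩
    · exact Dec.mk' hdd hr₁ hr₂ hf₁ hf₂ (by omega)
    · obtain ⟨L, hL, hl, hfl⟩ := h'.rev.move
      have he' : e = d₃.reverse ++ Y.mirror.x ++ (flat K₁).reverse := by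
        rw [← List.reverse_reverse e, he]; simp [Piece.mirror]
      have := hL.of_rev.step_same (α := α) (β := β) (dd := dd) (e := d₃.reverse)
        (d' := (flat K₁).reverse ++ X.x ++ d') (b := b) hY (by simp [hK])
        (by rw [← List.reverse_reverse (flat L), hfl]; simp [Piece.mirror, hβ])
        (by simpa [he'] using hd) hdd (by simpa [he'] using hSF)
      obtain ⟨M₁, Q, M₂, hM, hMn, hMz⟩ := this
      exact ⟨M₁, Q, M₂, hM, by simp at hMn ⊢; omega, hMz⟩
  · obtain ⟨L, hL, hl, hfl⟩ := h'.move
    have := hL.step_same (α := α) (β := β) (dd := dd) (e := e ++ X.x ++ flat K₁)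
      (d' := d₃) (b := b) hY (by simp [hfl, hα]) hK (by simpa using hd) hdd (by simpa using hSF)
    obtain ⟨M₁, Q, M₂, hM, hMn, hMz⟩ := this
    exact ⟨M₁, Q, M₂, hM, by simp at hMn ⊢; omega, hMz⟩

/-- Rewriting an occurrence of a member of one of the classes does not increase the number of
pieces needed. -/
theorem Dec.step {S : Sys A} {b : Bool} {n : ℕ} {α β d dd : List A} (h : S.Dec n (α ++ d ++ β))
    (hd : d ∈ S.C b) (hdd : dd ∈ S.C b) (hSF : S.SF (α ++ d ++ β)) : S.Dec n (α ++ dd ++ β) := by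
  have mono : ∀ {m z}, m ≤ n → S.Dec m z → S.Dec n z := by
    rintro m z hm ⟨L₁, P, L₂, h1, h2, h3⟩
    exact ⟨L₁, P, L₂, h1, h2.trans hm, h3⟩
  obtain ⟨L₁, P, L₂, hZ, hn, hz⟩ := h
  have hd0 : d ≠ [] := S.ne_nil hd
  obtain ⟨L₁, P, L₂, s₁, s₂, hZ, hn', hPx, hs₂, rfl, hγ⟩ :=
    hZ.focus (α := α) (γ := d ++ β) (by simp [hd0]) (by rw [← hz]; simp)
  rw [← hn'] at hn
  -- the occurrence lies inside `P`
  have inside : ∀ t', s₂ = d ++ t' → β = t' ++ flat L₂ →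
      S.Dec n ((flat L₁).reverse ++ s₁ ++ dd ++ β) := by
    rintro t' rfl rfl
    cases ht : P.t with
    | none =>
      obtain ⟨hp, hq, a, ha⟩ := hZ.2.1.1 ht
      have hlen := congrArg List.length (hPx.symm.trans ha)
      have hd1 := List.length_pos_iff.2 hd0
      simp only [List.length_append, List.length_cons, List.length_nil] at hlen
      obtain rfl : s₁ = [] := List.length_eq_zero_iff.1 (by omega)
      obtain rfl : t' = [] := List.length_eq_zero_iff.1 (by omega)
      obtain ⟨h1, -, h2⟩ := hZ
      rw [ht, hp] at h1
      rw [ht, hq] at h2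
      exact Dec.mk' hdd (R.of_none (by simpa using h1)) h2.of_none (by simp) (by simp) hn
    | some c =>
      obtain ⟨-, hC⟩ := hZ.2.1.2 c ht
      refine ⟨L₁, ⟨P.t, P.p, s₁ ++ dd ++ t', P.q⟩, L₂, ⟨hZ.1, ⟨fun h => ?_, fun c' hc => ?_⟩,
        hZ.2.2⟩, hn, by simp⟩
      · simp [ht] at h
      · obtain rfl : c = c' := by simpa [ht] using hc
        refine ⟨by simp [S.ne_nil hdd], ?_⟩
        exact S.sat hC (S.sub (P.p ++ s₁) (t' ++ P.q) (S.rel hd hdd) (by simp [hPx]) (by simp))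
  rcases List.append_eq_append_iff.1 hγ with ⟨t', h1, h2⟩ | ⟨d', h1, h2⟩
  · exact inside t' h1 h2
  by_cases hd' : d' = []
  · exact inside [] (by simp [h1, hd']) (by simpa [hd'] using h2.symm)
  subst h1
  by_cases hs₁ : s₁ = []
  · subst hs₁
    obtain rfl : P.x = s₂ := by simpa using hPx
    have := mono hn (hZ.step_pivot (α := (flat L₁).reverse) (e := []) (by simp) h2
      (by simpa using hd) hdd (by simpa using hSF))
    simpa using this
  cases L₂ with
  | nil => simp [hd'] at h2
  | cons Q L₃ =>
  have key : ∀ g, d' = Q.x ++ g → flat L₃ = g ++ β →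
      S.Dec n ((flat L₁).reverse ++ s₁ ++ dd ++ β) := by
    rintro g rfl hg
    refine mono ?_ (hZ.right.step_pivot (α := (flat L₁).reverse ++ s₁) (e := s₂) (d' := g)
      (by simp [Piece.mirror, hPx]) hg (by simpa using hd) hdd (by simpa using hSF))
    simp at hn ⊢; omega
  have h2' := h2
  simp only [flat_cons] at h2'
  rcases List.append_eq_append_iff.1 h2' with ⟨g, h3, h4⟩ | ⟨r, h3, h4⟩
  · exact key g h3 h4
  by_cases hr : r = []
  · exact key [] (by simp [h3, hr]) (by simp [h4, hr])
  -- the occurrence ends in the piece after `P`, and both pieces are covered only partially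
  exfalso
  obtain ⟨hR₁, hP, ha, hQ, hR₃⟩ := hZ
  have hpos := fun {l : List A} (h : l ≠ []) => List.length_pos_iff.2 h
  cases htP : P.t with
  | none =>
    obtain ⟨-, -, a, hx⟩ := hP.1 htP
    have hlen := congrArg List.length (hPx.symm.trans hx)
    have := hpos hs₁
    have := hpos hs₂
    simp at hlen; omega
  | some c =>
  cases htQ : Q.t with
  | none =>
    obtain ⟨-, -, a, hx⟩ := hQ.1 htQ
    have hlen := congrArg List.length (h3.symm.trans hx)
    have := hpos hd'
    have := hpos hr
    simp at hlen; omega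
  | some c' =>
  obtain ⟨-, hCP⟩ := hP.2 c htP
  obtain ⟨-, hCQ⟩ := hQ.2 c' htQ
  by_cases hc' : c' = b
  · subst hc'
    rw [htQ] at hR₃
    rw [h3] at hCQ
    exact S.no_overlap (α := (flat L₁).reverse ++ s₁) hR₃ hCQ hd hr (by simpa [h4] using hSF)
  by_cases hc : c = b
  · subst hc
    rw [htP] at hR₁
    rw [hPx] at hCP
    refine S.rev.no_overlap (b := c) (α := β.reverse) (e := d'.reverse) (h := s₂.reverse)
      (r := s₁.reverse) (p := P.q.reverse) hR₁ ?_ ?_ (by simpa using hs₁) ?_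
    · rw [mem_rev_C]; simpa using hCP
    · rw [mem_rev_C]; simpa using hd
    · simpa using hSF.rev
  obtain rfl : c = c' := (by decide : ∀ a b c : Bool, a ≠ c → b ≠ c → a = b) c c' b hc hc'
  have hq : P.q = [] := by
    by_contra h
    obtain ⟨-, b', h5, h6, -⟩ := ha.1 h
    rw [htP] at h5; rw [htQ] at h6
    obtain rfl : c = b' := by simpa using h5
    simp at h6
  have hp : Q.p = [] := by
    by_contra h
    obtain ⟨-, b', h5, h6, -⟩ := ha.2 h
    rw [htP] at h5; rw [htQ] at h6
    obtain rfl : c = b' := by simpa using h5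
    simp at h6
  obtain ⟨y₁, hy₁⟩ := hR₁.act
  obtain ⟨y₂, hy₂⟩ := hR₃.act
  rw [rev_E] at hy₁
  refine hSF.no (a := y₁.reverse) (s := Q.x ++ Q.q) (c := y₂) (S.trans (S.trans
    (S.sub [] (P.x ++ Q.x ++ flat L₃) hy₁ (by simp [hPx, h3, h4]) rfl)
    (S.sub (y₁.reverse ++ P.p ++ P.x ++ Q.x) [] hy₂ (by simp) rfl))
    (S.sub y₁.reverse (Q.x ++ Q.q ++ y₂) (S.rel hCP hCQ) (by simp [hq]) (by simp [hp]; rfl)))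
    (by simp) (by simp [hQ.x_ne])

/-- Initially every letter is a piece of its own. -/
theorem Dec.initial (S : Sys A) {w : List A} (hw : w ≠ []) : S.Dec w.length w := by
  have hflat : ∀ l : List A, flat (l.map fun a => (⟨none, [], [a], []⟩ : Piece A)) = l := by
    intro l; induction l with
    | nil => rfl
    | cons a l ih => simp [ih]
  have hR : ∀ l : List A, S.R none [] (l.map fun a => (⟨none, [], [a], []⟩ : Piece A)) := by
    intro l; induction l with
    | nil => rfl
    | cons a l ih => exact ⟨⟨by simp, by simp⟩, ⟨by simp, by simp⟩, ih⟩
  cases w with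
  | nil => exact absurd rfl hw
  | cons a l =>
    exact ⟨[], ⟨none, [], [a], []⟩, l.map fun a => ⟨none, [], [a], []⟩,
      ⟨rfl, ⟨by simp, by simp⟩, hR l⟩, by simp; omega, by simp [hflat]⟩

/-- If the classes contain only words of length at most `M`, so do the pieces. -/
theorem Dec.length_le {S : Sys A} {M n : ℕ} {z : List A} (hM : 1 ≤ M)
    (hC : ∀ b, ∀ x ∈ S.C b, x.length ≤ M) (h : S.Dec n z) : z.length ≤ M * n := by
  have hgood : ∀ (S : Sys A), (∀ b, ∀ x ∈ S.C b, x.length ≤ M) → ∀ P, S.Good P →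
      P.x.length ≤ M := by
    intro S hC P hP
    cases ht : P.t with
    | none => obtain ⟨-, -, a, ha⟩ := hP.1 ht; simpa [ha] using hM
    | some b =>
      have := hC b _ (hP.2 b ht).2
      simp at this; omega
  have hlist : ∀ (S : Sys A), (∀ b, ∀ x ∈ S.C b, x.length ≤ M) → ∀ L t q, S.R t q L →
      (flat L).length ≤ M * L.length := by
    intro S hC L
    induction L with
    | nil => simp
    | cons Q L ih =>
      rintro t q ⟨-, hQ, hR⟩
      have h1 := ih _ _ hR
      have h2 := hgood S hC Q hQ
      simp [mul_add]; omega
  obtain ⟨L₁, P, L₂, ⟨h1, hg, h2⟩, hn, rfl⟩ := h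
  have hC' : ∀ b, ∀ x ∈ S.rev.C b, x.length ≤ M := fun b x hx => by
    simpa using hC b _ hx
  have e1 := hlist _ hC' _ _ _ h1
  have e2 := hlist _ hC _ _ _ h2
  have e3 := hgood _ hC _ hg
  have e4 := Nat.mul_le_mul_left M hn
  simp only [List.length_append, List.length_reverse]
  simp [mul_add] at e4
  omega

end Sys

/-! ### Finiteness of the class of a relatively square-free word -/

section Classes

variable {π : List A → List A → Prop}

theorem OneStep.symm {x y : List A} : OneStep π x y → OneStep π y x := by
  rintro ⟨r, s, u, v, rfl, rfl, h⟩
  exact ⟨r, s, v, u, rfl, rfl, h.symm⟩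

theorem OneStep.congr (r s : List A) {x y : List A} :
    OneStep π x y → OneStep π (r ++ x ++ s) (r ++ y ++ s) := by
  rintro ⟨r', s', u, v, rfl, rfl, h⟩
  exact ⟨r ++ r', s' ++ s, u, v, by simp, by simp, h⟩

theorem EqRel.symm {x y : List A} (h : EqRel π x y) : EqRel π y x := by
  induction h with
  | refl => exact .refl
  | tail _ h ih => exact .head h.symm ih

theorem EqRel.trans {x y z : List A} (h : EqRel π x y) (h' : EqRel π y z) : EqRel π x z :=
  Relation.ReflTransGen.trans h h'

theorem EqRel.congr (r s : List A) {x y : List A} (h : EqRel π x y) :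
    EqRel π (r ++ x ++ s) (r ++ y ++ s) := by
  induction h with
  | refl => exact .refl
  | tail _ h ih => exact .tail ih (h.congr r s)

/-- A set of words containing `x` and stable under rewriting contains the class of `x`. -/
theorem EqRel.mem_of_stable {x z : List A} (h : EqRel π x z) (S : Set (List A)) (hx : x ∈ S)
    (hS : ∀ y z, EqRel π x y → y ∈ S → OneStep π y z → z ∈ S) : z ∈ S := by
  induction h with
  | refl => exact hx
  | tail h h' ih => exact hS _ _ h ih h'

/-- The system of defining relations that identifies any two words of `G false`, and any two words
of `G true`. -/
def Rl (G : Bool → Set (List A)) (x y : List A) : Prop := ∃ b, x ∈ G b ∧ y ∈ G b ∧ x ≠ y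

/-- The family `G c` alone: the other family is emptied. -/
def only (G : Bool → Set (List A)) (c b : Bool) : Set (List A) := {x ∈ G b | b = c}

variable {G : Bool → Set (List A)}

theorem Rl.elim {x y : List A} (h : OneStep (Rl G) x y) :
    ∃ b r a a' s, a ∈ G b ∧ a' ∈ G b ∧ a ≠ a' ∧ x = r ++ a ++ s ∧ y = r ++ a' ++ s := by
  obtain ⟨r, s, a, a', rfl, rfl, ⟨b, h1, h2, h3⟩ | ⟨b, h1, h2, h3⟩⟩ := h
  · exact ⟨b, r, a, a', s, h1, h2, h3, rfl, rfl⟩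
  · exact ⟨b, r, a, a', s, h2, h1, h3.symm, rfl, rfl⟩

theorem Rl.step {b : Bool} (r s : List A) {a a' : List A} (h : a ∈ G b) (h' : a' ∈ G b) (hne : a ≠ a') :
    OneStep (Rl G) (r ++ a ++ s) (r ++ a' ++ s) :=
  ⟨r, s, a, a', rfl, rfl, .inl ⟨b, h, h', hne⟩⟩

theorem Rl.eqRel {b : Bool} {a a' : List A} (h : a ∈ G b) (h' : a' ∈ G b) :
    EqRel (Rl G) a a' := by
  by_cases hne : a = a'
  · subst hne; exact .refl
  · exact .single (by simpa using Rl.step [] [] h h' hne)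

theorem only_le {c : Bool} {x y : List A} (h : EqRel (Rl (only G c)) x y) : EqRel (Rl G) x y := by
  refine Relation.ReflTransGen.mono (fun x y h => ?_) _ _ h
  obtain ⟨b, r, a, a', s, h1, h2, h3, rfl, rfl⟩ := Rl.elim h
  exact Rl.step r s h1.1 h2.1 h3

/-- `z` occurs in some word of the class of `w`. -/
def Occ (G : Bool → Set (List A)) (w z : List A) : Prop := ∃ α β, EqRel (Rl G) w (α ++ z ++ β)

/-- Some relation from the family `G b` is applicable to some word of the class of `w`. -/
def Act (G : Bool → Set (List A)) (w : List A) (b : Bool) : Prop :=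
  ∃ x ∈ G b, ∃ y ∈ G b, x ≠ y ∧ Occ G w x

theorem Occ.of_eqRel {w x y : List A} (h : Occ G w x) (h' : EqRel (Rl G) x y) : Occ G w y := by
  obtain ⟨α, β, h⟩ := h
  exact ⟨α, β, h.trans (h'.congr α β)⟩

theorem Occ.sf {w x : List A} (hw : SFRel (Rl G) w) (h : Occ G w x) : SFRel (Rl G) x := by
  intro y hy p s q hx
  obtain ⟨α, β, h⟩ := h.of_eqRel hy
  exact hw _ h (α ++ p) s (q ++ β) (by simp [hx])

/-- A word is not equivalent to a proper factor of itself: from `z ∼ p ++ z ++ q` it follows that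
`z ∼ p ++ p ++ z ++ q ++ q`. -/
theorem SFRel.no_factor {p z q : List A} (hz : SFRel (Rl G) z) (h : EqRel (Rl G) z (p ++ z ++ q)) :
    p = [] ∧ q = [] := by
  have h2 := h.trans (h.congr p q)
  exact ⟨hz _ h2 [] p (z ++ q ++ q) (by simp), hz _ h2 (p ++ p ++ z) q [] (by simp)⟩

theorem Act.occ {w x z : List A} {b : Bool} (h : Act G w b) (hx : x ∈ G b)
    (hz : EqRel (Rl G) x z) : Occ G w z := by
  obtain ⟨y, hy, -, -, -, ho⟩ := h
  exact (ho.of_eqRel (Rl.eqRel hy hx)).of_eqRel hz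

/-- This is where it matters that a relation applies between two distinct words: otherwise the
family could consist of the empty word alone. -/
theorem Act.nil_not {w x : List A} {b : Bool} (hw : SFRel (Rl G) w) (h : Act G w b)
    (hx : x ∈ G b) : ¬ EqRel (Rl G) x [] := by
  intro h0
  -- every word `c` of the family is equivalent to `c ++ c`, hence empty
  have hall : ∀ c ∈ G b, c = [] := fun c hc => by
    have h1 : EqRel (Rl G) c [] := (Rl.eqRel hc hx).trans h0
    have h2 : EqRel (Rl G) c (c ++ c) := by
      simpa using h1.symm.congr [] c
    exact ((h.occ hc .refl).sf hw) _ h2 [] c [] (by simp)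
  obtain ⟨y, hy, y', hy', hne, -⟩ := h
  exact hne ((hall y hy).trans (hall y' hy').symm)

/-- The system of the two classes of defining words; a class is dropped if none of its relations
ever applies to a word equivalent to `w`. -/
def toSys (G : Bool → Set (List A)) (w : List A) (hw : SFRel (Rl G) w) : Sys A where
  E := EqRel (Rl G)
  refl _ := .refl
  symm := EqRel.symm
  trans := EqRel.trans
  congr r s _ _ h := h.congr r s
  C b := {z | Act G w b ∧ ∃ x ∈ G b, EqRel (Rl G) x z}
  sat := fun ⟨h, x, hx, hz⟩ h' => ⟨h, x, hx, hz.trans h'⟩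
  rel := fun ⟨_, _, hx, hz⟩ ⟨_, _, hx', hz'⟩ => (hz.symm.trans (Rl.eqRel hx hx')).trans hz'
  ne := fun ⟨h, _, hx, hz⟩ => h.nil_not hw hx hz

/-- The class of `w` is finite as soon as the classes of the defining words involved are. -/
theorem finite_class_of_finite (hG : ∀ b, (G b).Finite) {w : List A} (hw : SFRel (Rl G) w)
    (hC : ∀ b, Act G w b → {z | ∃ x ∈ G b, EqRel (Rl G) x z}.Finite) :
    {z | EqRel (Rl G) w z}.Finite := by
  set S := toSys G w hw with hS
  have hfin : ∀ b, (S.C b).Finite := fun b => by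
    by_cases h : Act G w b
    · exact (hC b h).subset fun z hz => hz.2
    · exact Set.finite_empty.subset fun z hz => h hz.1
  -- a common bound for the lengths
  obtain ⟨M, hM⟩ : ∃ M, ∀ b, ∀ x ∈ S.C b, x.length ≤ M := by
    have hb : ∀ b, ∃ M, ∀ x ∈ S.C b, x.length ≤ M := fun b => by
      obtain ⟨M, hM⟩ := ((hfin b).image List.length).bddAbove
      exact ⟨M, fun x hx => hM ⟨x, hx, rfl⟩⟩
    choose M hM using hb
    exact ⟨max (M true) (M false), fun b x hx => (hM b x hx).trans (by cases b <;> simp)⟩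
  have hstep : ∀ y z, EqRel (Rl G) w y → OneStep (Rl G) y z →
      ∃ b r a a' s, a ∈ S.C b ∧ a' ∈ S.C b ∧ y = r ++ a ++ s ∧ z = r ++ a' ++ s := by
    intro y z hy h
    obtain ⟨b, r, a, a', s, h1, h2, h3, rfl, rfl⟩ := Rl.elim h
    have hact : Act G w b := ⟨a, h1, a', h2, h3, r, s, hy⟩
    exact ⟨b, r, a, a', s, ⟨hact, a, h1, .refl⟩, ⟨hact, a', h2, .refl⟩, rfl, rfl⟩
  have hlen : ∀ z, EqRel (Rl G) w z → z.length ≤ (M + 1) * w.length := by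
    by_cases hw0 : w = []
    · subst hw0
      intro z hz
      obtain rfl : z = [] := hz.mem_of_stable {[]} rfl fun y z hy h h' => by
        obtain ⟨b, r, a, a', s, h1, h2, h3, rfl⟩ := hstep y z hy h'
        have h : r ++ a ++ s = [] := h3.symm.trans h
        simp only [List.append_eq_nil_iff] at h
        exact absurd h.1.2 (S.ne_nil h1)
      simp
    · intro z hz
      have : S.Dec w.length z :=
        hz.mem_of_stable {z | S.Dec w.length z} (Sys.Dec.initial S hw0) fun y z hy h h' => by
          obtain ⟨b, r, a, a', s, h1, h2, rfl, rfl⟩ := hstep y z hy h'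
          exact Sys.Dec.step h h1 h2 fun t ht => hw t (hy.trans ht)
      exact this.length_le (by omega) fun b x hx => (hM b x hx).trans (by omega)
  -- no new letters appear besides those of the defining words
  set T : Set A := {a | a ∈ w} ∪ ⋃ b, ⋃ g ∈ G b, {a | a ∈ g} with hT
  have hTfin : T.Finite := by
    refine (List.finite_toSet w).union (Set.finite_iUnion fun b => (hG b).biUnion fun g _ => ?_)
    exact List.finite_toSet g
  have hlet : ∀ z, EqRel (Rl G) w z → ∀ a ∈ z, a ∈ T := by
    intro z hz
    refine hz.mem_of_stable {z | ∀ a ∈ z, a ∈ T} (fun a ha => Or.inl ha) fun y z hy h h' => ?_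
    obtain ⟨b, r, a, a', s, h1, h2, h3, rfl, rfl⟩ := Rl.elim h'
    intro c hc
    simp only [List.mem_append] at hc
    rcases hc with (hc | hc) | hc
    · exact h c (by simp [hc])
    · exact Or.inr (by simp only [Set.mem_iUnion]; exact ⟨b, a', h2, hc⟩)
    · exact h c (by simp [hc])
  have : Finite T := hTfin
  refine ((List.finite_length_le T ((M + 1) * w.length)).image (List.map (↑))).subset ?_
  intro z hz
  have h1 := hlet z hz
  have h2 := hlen z hz
  lift z to List T using h1
  exact ⟨z, by simpa using h2, rfl⟩

/-- Relations of `G b` apply to the words equivalent to a member of `G b` only as a whole, since no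
word is equivalent to a proper factor of itself. -/
theorem class_subset {w : List A} {b : Bool} (hw : SFRel (Rl G) w) (hb : Act G w b) :
    {z | ∃ x ∈ G b, EqRel (Rl G) x z} ⊆ ⋃ x ∈ G b, {z | EqRel (Rl (only G !b)) x z} := by
  rintro z ⟨x, hx, hz⟩
  refine hz.mem_of_stable _ (by simp only [Set.mem_iUnion]; exact ⟨x, hx, .refl⟩) ?_
  intro y z hy hyS h
  obtain ⟨c, r, a, a', s, h1, h2, h3, rfl, rfl⟩ := Rl.elim h
  simp only [Set.mem_iUnion] at hyS ⊢
  obtain ⟨g, hg, hgy⟩ := hyS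
  by_cases hc : c = b
  · subst hc
    have hsf : SFRel (Rl G) a := (hb.occ h1 .refl).sf hw
    obtain ⟨rfl, rfl⟩ := hsf.no_factor ((Rl.eqRel h1 hx).trans hy)
    exact ⟨a', h2, by simpa using .refl⟩
  · have hc' : c = !b := by cases c <;> cases b <;> simp_all
    exact ⟨g, hg, .tail hgy (Rl.step r s (b := c) ⟨h1, hc'⟩ ⟨h2, hc'⟩ h3)⟩

/-- For a single family, the classes of the defining words reduce to the family itself. -/
theorem finite_class_only (hG : ∀ b, (G b).Finite) {c : Bool} {w : List A}
    (hw : SFRel (Rl (only G c)) w) : {z | EqRel (Rl (only G c)) w z}.Finite := by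
  have hG' : ∀ b, (only G c b).Finite := fun b => (hG b).subset fun x hx => hx.1
  refine finite_class_of_finite hG' hw fun b hb => ((hG' b).biUnion fun x _ => ?_).subset
    (class_subset hw hb)
  obtain ⟨-, ⟨-, rfl⟩, -⟩ := hb
  refine (Set.finite_singleton x).subset fun z hz => hz.mem_of_stable {x} rfl fun y z _ _ h => ?_
  obtain ⟨d, r, a, a', s, h1, -⟩ := Rl.elim h
  have := h1.2.symm.trans h1.1.2
  simp at this

/-- The classes of the defining words are finite because, by `class_subset`, they are covered by
finitely many classes with respect to the other family alone. -/
theorem finite_class (hG : ∀ b, (G b).Finite) {w : List A} (hw : SFRel (Rl G) w) :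
    {z | EqRel (Rl G) w z}.Finite := by
  refine finite_class_of_finite hG hw fun b hb => ((hG b).biUnion fun x hx => ?_).subset
    (class_subset hw hb)
  exact finite_class_only hG fun z hz => ((hb.occ hx .refl).sf hw) z (only_le hz)

/-- The pairs of distinct members of two injective families are the defining relations, up to
orientation. -/
theorem oneStep_family {nu nv : ℕ} {u : Fin nu → List A} {v : Fin nv → List A}
    (hu : Function.Injective u) (hv : Function.Injective v) :
    OneStep (PiRel (FamilyRel u) (FamilyRel v)) =
      OneStep (Rl fun b => cond b (Set.range u) (Set.range v)) := by
  have key : ∀ {n : ℕ} {f : Fin n → List A}, Function.Injective f → ∀ x y,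
      (FamilyRel f x y ∨ FamilyRel f y x) ↔ x ∈ Set.range f ∧ y ∈ Set.range f ∧ x ≠ y := by
    intro n f hf x y
    constructor
    · rintro (⟨i, j, h, rfl, rfl⟩ | ⟨i, j, h, rfl, rfl⟩)
      · exact ⟨⟨i, rfl⟩, ⟨j, rfl⟩, fun e => h.ne (hf e)⟩
      · exact ⟨⟨j, rfl⟩, ⟨i, rfl⟩, fun e => h.ne (hf e).symm⟩
    · rintro ⟨⟨i, rfl⟩, ⟨j, rfl⟩, h⟩
      rcases lt_trichotomy i j with h' | rfl | h'
      · exact .inl ⟨i, j, h', rfl, rfl⟩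
      · exact absurd rfl h
      · exact .inr ⟨j, i, h', rfl, rfl⟩
  funext x y
  refine propext (exists_congr fun r => exists_congr fun s => exists_congr fun a =>
    exists_congr fun b => and_congr_right fun _ => and_congr_right fun _ => ?_)
  have h1 := key hu a b
  have h2 := key hv a b
  simp only [PiRel, Rl, Bool.exists_bool, cond_true, cond_false, ne_comm (a := b)]
  tauto

end Classes

/-! ### Deciding relative square-freeness -/

section Decide

variable {A : Type*} [DecidableEq A] (P : List (List A × List A))

/-- All words obtained from `x` by replacing one occurrence of `a` by `b`, for `(a, b)` in `P`. -/
def steps (x : List A) : List (List A) :=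
  P.flatMap fun p => (List.range (x.length + 1)).flatMap fun k =>
    if (x.drop k).take p.1.length = p.1 then [x.take k ++ p.2 ++ x.drop (k + p.1.length)] else []

theorem mem_steps {x y : List A} :
    y ∈ steps P x ↔ ∃ p ∈ P, ∃ r s, x = r ++ p.1 ++ s ∧ y = r ++ p.2 ++ s := by
  simp only [steps, List.mem_flatMap, List.mem_range]
  refine exists_congr fun p => and_congr_right fun _ => ?_
  constructor
  · rintro ⟨k, hk, h⟩
    split_ifs at h with h'
    · refine ⟨x.take k, x.drop (k + p.1.length), ?_, by simpa using h⟩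
      conv_lhs => rw [← List.take_append_drop k x, ← List.take_append_drop p.1.length (x.drop k), h']
      simp
    · simp at h
  · rintro ⟨r, s, rfl, rfl⟩
    refine ⟨r.length, by simp, ?_⟩
    simp

/-- The words reached from `w` in at most `n` steps. -/
def reach (n : ℕ) (w : List A) : List (List A) :=
  (fun L : List (List A) => L ++ L.flatMap (steps P))^[n] [w]

theorem reach_succ (n : ℕ) (w : List A) :
    reach P (n + 1) w = reach P n w ++ (reach P n w).flatMap (steps P) :=
  Function.iterate_succ_apply' ..

variable {P} {π : List A → List A → Prop}

theorem reach_mono {w z : List A} {m n : ℕ} (h : m ≤ n) (hz : z ∈ reach P m w) :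
    z ∈ reach P n w := by
  induction h with
  | refl => exact hz
  | step _ ih => rw [reach_succ]; exact List.mem_append_left _ ih

theorem eqRel_of_reach (hP : ∀ x y, OneStep π x y ↔ y ∈ steps P x) {n : ℕ} {w z : List A}
    (h : z ∈ reach P n w) : EqRel π w z := by
  induction n generalizing z with
  | zero => obtain rfl : z = w := by simpa [reach] using h
            exact .refl
  | succ n ih =>
    rw [reach_succ, List.mem_append, List.mem_flatMap] at h
    rcases h with h | ⟨y, hy, h⟩
    · exact ih h
    · exact .tail (ih hy) ((hP _ _).2 h)

theorem reach_of_eqRel (hP : ∀ x y, OneStep π x y ↔ y ∈ steps P x) {w z : List A}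
    (h : EqRel π w z) : ∃ n, z ∈ reach P n w := by
  induction h with
  | refl => exact ⟨0, by simp [reach]⟩
  | tail _ h ih =>
    obtain ⟨n, hn⟩ := ih
    refine ⟨n + 1, ?_⟩
    rw [reach_succ, List.mem_append, List.mem_flatMap]
    exact .inr ⟨_, hn, (hP _ _).1 h⟩

/-- The list `L` of words is closed under rewriting. -/
def Closed (P : List (List A × List A)) (L : List (List A)) : Prop :=
  ∀ z ∈ L.flatMap (steps P), z ∈ L

theorem mem_of_closed (hP : ∀ x y, OneStep π x y ↔ y ∈ steps P x) {n : ℕ} {w z : List A}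
    (hc : Closed P (reach P n w)) (h : EqRel π w z) : z ∈ reach P n w :=
  h.mem_of_stable {z | z ∈ reach P n w} (reach_mono (Nat.zero_le n) (by simp [reach]))
    fun y z _ hy h => hc z (List.mem_flatMap.2 ⟨y, hy, (hP _ _).1 h⟩)

/-- The search that lists the class of `w` until it either meets a word with a square or has
exhausted the class terminates: in the absence of squares the class is finite. -/
theorem exists_terminates (hP : ∀ x y, OneStep π x y ↔ y ∈ steps P x)
    (hfin : ∀ w, SFRel π w → {z | EqRel π w z}.Finite) (w : List A) :
    ∃ n, Closed P (reach P n w) ∨ ¬ ∀ z ∈ reach P n w, IsSquareFreeWord z := by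
  by_cases hw : SFRel π w
  · choose! N hN using fun z (h : EqRel π w z) => reach_of_eqRel hP h
    obtain ⟨n, hn⟩ := ((hfin w hw).image N).bddAbove
    refine ⟨n, .inl fun z hz => ?_⟩
    obtain ⟨y, hy, hz⟩ := List.mem_flatMap.1 hz
    have hz' : EqRel π w z := .tail (eqRel_of_reach hP hy) ((hP _ _).2 hz)
    exact reach_mono (hn ⟨z, hz', rfl⟩) (hN z hz')
  · simp only [SFRel, not_forall] at hw
    obtain ⟨z, hz, h⟩ := hw
    obtain ⟨n, hn⟩ := reach_of_eqRel hP hz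
    exact ⟨n, .inr fun h' => h (h' z hn)⟩

end Decide

theorem isSquareFree_iff (z : List A) : IsSquareFreeWord z ↔
    ∀ i < z.length, ∀ l < z.length, ¬ (i + (l + 1) + (l + 1) ≤ z.length ∧
      (z.drop i).take (l + 1) = (z.drop (i + (l + 1))).take (l + 1)) := by
  constructor
  · rintro h i hi l hl ⟨h1, h2⟩
    have := h (z.take i) ((z.drop i).take (l + 1)) (z.drop (i + (l + 1) + (l + 1))) (by
      conv_lhs => rw [← List.take_append_drop i z, ← List.take_append_drop (l + 1) (z.drop i),
        ← List.take_append_drop (l + 1) ((z.drop i).drop (l + 1)), List.drop_drop, ← h2]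
      simp [add_assoc])
    have := congrArg List.length this
    simp at this
    omega
  · rintro h a s c rfl
    by_contra hs
    have hpos := List.length_pos_iff.2 hs
    refine h a.length (by simp; omega) (s.length - 1) (by simp; omega) ?_
    rw [Nat.sub_add_cancel hpos]
    refine ⟨by simp; omega, ?_⟩
    have h1 : (a ++ s ++ s ++ c).drop a.length = s ++ (s ++ c) := by simp
    have h2 : (a ++ s ++ s ++ c).drop (a.length + s.length) = s ++ c := by
      rw [← List.drop_drop, h1, List.drop_left]
    rw [h1, h2, List.take_left, List.take_left]

section Computable

open Primrec

variable {A : Type*} [Primcodable A]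

theorem primrec_isSquareFree : PrimrecPred (IsSquareFreeWord (A := A)) := by
  have hR : PrimrecRel fun (l : ℕ) (x : ℕ × List A) =>
      ¬ (x.1 + (l + 1) + (l + 1) ≤ x.2.length ∧
        (x.2.drop x.1).take (l + 1) = (x.2.drop (x.1 + (l + 1))).take (l + 1)) := by
    have hl : Primrec fun y : ℕ × (ℕ × List A) => y.1 + 1 := succ.comp fst
    have hi : Primrec fun y : ℕ × (ℕ × List A) => y.2.1 := fst.comp snd
    have hz : Primrec fun y : ℕ × (ℕ × List A) => y.2.2 := snd.comp snd
    have hil := nat_add.comp hi hl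
    exact ((nat_le.comp (nat_add.comp hil hl) (list_length.comp hz)).and
      (Primrec.eq.comp (list_take.comp hl (list_drop.comp hi hz))
        (list_take.comp hl (list_drop.comp hil hz)))).not
  have h1 : PrimrecRel fun (i : ℕ) (z : List A) => ∀ l < z.length,
      ¬ (i + (l + 1) + (l + 1) ≤ z.length ∧
        (z.drop i).take (l + 1) = (z.drop (i + (l + 1))).take (l + 1)) :=
    (hR.forall_mem_list.comp (list_range.comp (list_length.comp snd)) .id).of_eq
      fun y => by simp only [List.mem_range, id]
  exact (h1.forall_mem_list.comp (list_range.comp list_length) .id).of_eq fun z => by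
    simp only [isSquareFree_iff z, List.mem_range, id]

variable [DecidableEq A] (P : List (List A × List A))

theorem primrec_steps : Primrec (steps P) := by
  refine list_flatMap (.const P) (list_flatMap (β := ℕ)
    (list_range.comp (succ.comp (list_length.comp fst))) ?_)
  have hx : Primrec fun y : (List A × (List A × List A)) × ℕ => y.1.1 := fst.comp fst
  have ha : Primrec fun y : (List A × (List A × List A)) × ℕ => y.1.2.1 :=
    fst.comp (snd.comp fst)
  have hb : Primrec fun y : (List A × (List A × List A)) × ℕ => y.1.2.2 :=
    snd.comp (snd.comp fst)
  have hk : Primrec fun y : (List A × (List A × List A)) × ℕ => y.2 := snd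
  have hla := list_length.comp ha
  exact Primrec.ite (Primrec.eq.comp (list_take.comp hla (list_drop.comp hk hx)) ha)
    (list_cons.comp (list_append.comp (list_append.comp (list_take.comp hk hx) hb)
      (list_drop.comp (nat_add.comp hk hla) hx)) (.const [])) (.const [])

theorem primrec_reach : Primrec₂ fun (w : List A) (n : ℕ) => reach P n w := by
  have h : Primrec fun L : List (List A) => L ++ L.flatMap (steps P) :=
    list_append.comp .id (list_flatMap .id ((primrec_steps P).comp snd).to₂)
  exact nat_iterate snd (list_cons.comp fst (.const [])) (h.comp snd).to₂

theorem primrec_closed : PrimrecPred (Closed P) := by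
  have hmem : PrimrecRel fun (z : List A) (L : List (List A)) => z ∈ L :=
    (((Primrec.eq (α := List A)).exists_mem_list).comp snd fst).of_eq fun x => by simp
  exact hmem.forall_mem_list.comp (list_flatMap .id ((primrec_steps P).comp snd).to₂) .id

/-- The set of relatively square-free words is decidable for a finite system of relations, if the
classes of its members are finite. -/
theorem computable_sfRel {π : List A → List A → Prop}
    (hP : ∀ x y, OneStep π x y ↔ y ∈ steps P x)
    (hfin : ∀ w, SFRel π w → {z | EqRel π w z}.Finite) : ComputablePred (SFRel π) := by
  classical
  have hsf : PrimrecPred fun L : List (List A) => ∀ z ∈ L, IsSquareFreeWord z :=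
    primrec_isSquareFree.forall_mem_list
  have hdone : Primrec₂ fun (w : List A) (n : ℕ) =>
      decide (Closed P (reach P n w) ∨ ¬ ∀ z ∈ reach P n w, IsSquareFreeWord z) :=
    (((primrec_closed P).or hsf.not).decide.comp (primrec_reach P)).to₂
  have hex := exists_terminates hP hfin
  have hfind : Computable fun w => Nat.find (hex w) := by
    refine Partrec.of_eq_tot (Partrec.rfind hdone.to_comp.partrec₂) fun w => ?_
    refine Nat.mem_rfind.2 ⟨?_, fun {m} hm => ?_⟩
    · simpa using Nat.find_spec (hex w)
    · simpa using Nat.find_min (hex w) hm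
  refine ComputablePred.computable_iff.2 ⟨fun w =>
    decide (∀ z ∈ reach P (Nat.find (hex w)) w, IsSquareFreeWord z), ?_, ?_⟩
  · exact hsf.decide.to_comp.comp ((primrec_reach P).to_comp.comp .id hfind)
  · funext w
    rw [decide_eq_true_eq, eq_iff_iff]
    refine ⟨fun h z hz => h z (eqRel_of_reach hP hz), fun h z hz => ?_⟩
    rcases Nat.find_spec (hex w) with hc | hc
    · exact h z (mem_of_closed hP hc hz)
    · exact absurd h hc

end Computable

/-- The defining relations of two finite families form a finite list. -/
theorem exists_relation_list [DecidableEq A] {nu nv : ℕ} (u : Fin nu → List A)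
    (v : Fin nv → List A) : ∃ P : List (List A × List A), ∀ x y,
      OneStep (PiRel (FamilyRel u) (FamilyRel v)) x y ↔ y ∈ steps P x := by
  have hF : ∀ {n : ℕ} (f : Fin n → List A), {p : List A × List A | FamilyRel f p.1 p.2}.Finite :=
    fun f => (((Set.finite_range f).prod (Set.finite_range f))).subset fun p hp => by
      obtain ⟨i, j, -, h1, h2⟩ := hp
      exact ⟨⟨i, h1.symm⟩, ⟨j, h2.symm⟩⟩
  have h1 := (hF u).union (hF v)
  have h2 := h1.union (h1.image Prod.swap)
  refine ⟨h2.toFinset.toList, fun x y => ?_⟩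
  rw [mem_steps]
  constructor
  · rintro ⟨r, s, a, b, rfl, rfl, h | h⟩
    · exact ⟨(a, b), by simpa using .inl h, r, s, rfl, rfl⟩
    · exact ⟨(a, b), by simpa using .inr h, r, s, rfl, rfl⟩
  · rintro ⟨⟨a, b⟩, h, r, s, rfl, rfl⟩
    refine ⟨r, s, a, b, rfl, rfl, ?_⟩
    simpa [PiRel] using h

/-- Theorem 2: for a system of two families of defining relations
`π = {(u_i,u_j) : i<j} ∪ {(v_k,v_l) : k<l}`, every word square-free relative to `π`
has a finite equivalence class; consequently `SF(A,π)` is decidable. -/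
theorem two_relation_system_decidable {A : Type*} [Primcodable A] {nu nv : ℕ}
    (u : Fin nu → List A) (v : Fin nv → List A)
    (hu : Function.Injective u) (hv : Function.Injective v) :
    (∀ w : List A, SFRel (PiRel (FamilyRel u) (FamilyRel v)) w →
      {z | EqRel (PiRel (FamilyRel u) (FamilyRel v)) w z}.Finite) ∧
    ComputablePred (SFRel (PiRel (FamilyRel u) (FamilyRel v))) := by
  classical
  have hfin : ∀ w : List A, SFRel (PiRel (FamilyRel u) (FamilyRel v)) w →
      {z | EqRel (PiRel (FamilyRel u) (FamilyRel v)) w z}.Finite := by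
    intro w hw
    simp only [SFRel, EqRel, oneStep_family hu hv] at hw ⊢
    exact finite_class (fun b => by cases b <;> exact Set.finite_range _) hw
  obtain ⟨P, hP⟩ := exists_relation_list u v
  exact ⟨hfin, computable_sfRel P hP hfin⟩

end SqFreePaper
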